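/- arXiv:2405.19015 — 2 statements merged into one kernel-verified Lean document; each statement's English description precedes it below -/
import Mathlib

section
/- Let H be a real Hilbert space and X ⊆ H a nonempty closed convex set, and let P_X denote the metric projection onto X (the unique nearest-point map). Let f, g : H → ℝ be convex and differentiable, let β ≥ 0, η > 0, γ > 0, and define the regularized Lagrangian L(x, q) = f(x) + q·g(x) − (β/2)·q². Let x̄ ∈ X and q̄ ≥ 0, and set x⁺ = P_X(x̄ − η·(∇f(x̄) + q̄·∇g(x̄))) and q⁺ = max{0, q̄ + γ·(g(x̄) − β·q̄)}. Then for every u ∈ X and every q ≥ 0: L(x̄, q) − L(u, q̄) ≤ (1/(2η))·(‖u − x̄‖² − ‖u − x⁺‖²) + (1/(2γ))·((q − q̄)² − (q − q⁺)²) + (η/2)·‖∇f(x̄) + q̄·∇g(x̄)‖² + (γ/2)·(g(x̄) − β·q̄)². -/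
/-- First-order convexity inequality. -/
lemma grad_ineq_aux {H : Type*} [NormedAddCommGroup H] [InnerProductSpace ℝ H]
    [CompleteSpace H] {f : H → ℝ} {d x : H} (hf : ConvexOn ℝ Set.univ f)
    (hd : HasGradientAt f d x) (u : H) : f x + inner ℝ d (u - x) ≤ f u := by
  have h1 : ConvexOn ℝ Set.univ (f ∘ (AffineMap.lineMap x u : ℝ →ᵃ[ℝ] H)) := by
    simpa using hf.comp_affineMap (AffineMap.lineMap x u : ℝ →ᵃ[ℝ] H)
  have h2 : HasDerivAt (f ∘ (AffineMap.lineMap x u : ℝ →ᵃ[ℝ] H)) (inner ℝ d (u - x)) 0 := by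
    have h3 : HasDerivAt (AffineMap.lineMap x u : ℝ →ᵃ[ℝ] H) (u - x) 0 :=
      AffineMap.hasDerivAt_lineMap
    have h4 := hd.hasFDerivAt
    have h5 : x = (AffineMap.lineMap x u : ℝ →ᵃ[ℝ] H) 0 := by simp
    rw [h5] at h4
    have h6 := h4.comp_hasDerivAt (0 : ℝ) h3
    simpa using h6
  have h7 := h1.le_slope_of_hasDerivAt (Set.mem_univ 0) (Set.mem_univ 1) one_pos h2
  simp [slope_def_field] at h7
  linarith

/-- Variational characterization of the projection. -/
lemma proj_ineq_aux {H : Type*} [NormedAddCommGroup H] [InnerProductSpace ℝ H]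
    {X : Set H} (hX : Convex ℝ X) {y p : H} (hp : p ∈ X)
    (h : ∀ z ∈ X, ‖y - p‖ ≤ ‖y - z‖) (u : H) (hu : u ∈ X) :
    inner ℝ (y - p) (u - p) ≤ 0 := by
  refine (norm_eq_iInf_iff_real_inner_le_zero hX hp).1 ?_ u hu
  haveI : Nonempty X := ⟨⟨p, hp⟩⟩
  apply le_antisymm
  · exact le_ciInf fun w => h w w.2
  · exact ciInf_le ⟨0, by rintro _ ⟨w, rfl⟩; exact norm_nonneg _⟩ (⟨p, hp⟩ : X)


/-- One primal–dual step of projected gradient descent–ascent on the regularized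
Lagrangian `L(x,q) = f(x) + q·g(x) − (β/2)q²`: for every `u ∈ X` and `q ≥ 0`,
`L(x̄, q) − L(u, q̄)` is bounded by the stated telescoping and step-size terms. -/
theorem primal_dual_step {H : Type*} [NormedAddCommGroup H] [InnerProductSpace ℝ H]
    [CompleteSpace H]
    (X : Set H) (hXne : X.Nonempty) (hXcl : IsClosed X) (hXcv : Convex ℝ X)
    (P : H → H)
    (hP : ∀ y : H, P y ∈ X ∧ ∀ z ∈ X, ‖y - P y‖ ≤ ‖y - z‖)
    (f g : H → ℝ) (f' g' : H → H)
    (hf : ConvexOn ℝ Set.univ f) (hg : ConvexOn ℝ Set.univ g)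
    (hf' : ∀ x : H, HasGradientAt f (f' x) x)
    (hg' : ∀ x : H, HasGradientAt g (g' x) x)
    (β η γ : ℝ) (hβ : 0 ≤ β) (hη : 0 < η) (hγ : 0 < γ)
    (L : H → ℝ → ℝ) (hL : ∀ x p, L x p = f x + p * g x - β / 2 * p ^ 2)
    (xbar : H) (hxbar : xbar ∈ X) (qbar : ℝ) (hqbar : 0 ≤ qbar)
    (xplus : H) (hxplus : xplus = P (xbar - η • (f' xbar + qbar • g' xbar)))
    (qplus : ℝ) (hqplus : qplus = max 0 (qbar + γ * (g xbar - β * qbar))) :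
    ∀ u ∈ X, ∀ q : ℝ, 0 ≤ q →
      L xbar q - L u qbar ≤
        (1 / (2 * η)) * (‖u - xbar‖ ^ 2 - ‖u - xplus‖ ^ 2) +
        (1 / (2 * γ)) * ((q - qbar) ^ 2 - (q - qplus) ^ 2) +
        (η / 2) * ‖f' xbar + qbar • g' xbar‖ ^ 2 +
        (γ / 2) * (g xbar - β * qbar) ^ 2 := by
  intro u hu q hq
  have hfu := grad_ineq_aux hf (hf' xbar) u
  have hgu := mul_le_mul_of_nonneg_left (grad_ineq_aux hg (hg' xbar) u) hqbar
  obtain ⟨hm, hmin⟩ := hP (xbar - η • (f' xbar + qbar • g' xbar))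
  have hpr := proj_ineq_aux hXcv hm hmin u hu
  rw [← hxplus] at hpr
  have hd : inner ℝ (f' xbar + qbar • g' xbar) (u - xbar)
      = inner ℝ (f' xbar) (u - xbar) + qbar * inner ℝ (g' xbar) (u - xbar) := by
    rw [inner_add_left, real_inner_smul_left]
  generalize f' xbar + qbar • g' xbar = d at *
  have e1 : ‖u - (xbar - η • d)‖ ^ 2
      = ‖u - xbar‖ ^ 2 + 2 * (η * inner ℝ d (u - xbar)) + η ^ 2 * ‖d‖ ^ 2 := by
    rw [show u - (xbar - η • d) = (u - xbar) + η • d by abel, norm_add_sq_real,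
      real_inner_smul_right, real_inner_comm, norm_smul, mul_pow, Real.norm_eq_abs, sq_abs]
  have e2 : ‖u - (xbar - η • d)‖ ^ 2 = ‖u - xplus‖ ^ 2
      - 2 * inner ℝ (xbar - η • d - xplus) (u - xplus) + ‖xbar - η • d - xplus‖ ^ 2 := by
    rw [show u - (xbar - η • d) = (u - xplus) - (xbar - η • d - xplus) by abel,
      norm_sub_sq_real, real_inner_comm]
  have primal : - inner ℝ d (u - xbar) ≤
      (1 / (2 * η)) * (‖u - xbar‖ ^ 2 - ‖u - xplus‖ ^ 2) + (η / 2) * ‖d‖ ^ 2 := by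
    have k : (1 / (2 * η)) * (‖u - xbar‖ ^ 2 - ‖u - xplus‖ ^ 2) + (η / 2) * ‖d‖ ^ 2
        = (‖u - xbar‖ ^ 2 - ‖u - xplus‖ ^ 2 + η ^ 2 * ‖d‖ ^ 2) / (2 * η) := by
      field_simp
    rw [k, le_div_iff₀ (by positivity)]
    nlinarith [sq_nonneg ‖xbar - η • d - xplus‖]
  have dual : (q - qbar) * (g xbar - β * qbar) ≤
      (1 / (2 * γ)) * ((q - qbar) ^ 2 - (q - qplus) ^ 2)
        + (γ / 2) * (g xbar - β * qbar) ^ 2 := by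
    generalize g xbar - β * qbar = s at *
    have k : (1 / (2 * γ)) * ((q - qbar) ^ 2 - (q - qplus) ^ 2) + (γ / 2) * s ^ 2
        = ((q - qbar) ^ 2 - (q - qplus) ^ 2 + γ ^ 2 * s ^ 2) / (2 * γ) := by
      field_simp
    have k2 : (q - qplus) ^ 2 ≤ (q - (qbar + γ * s)) ^ 2 := by
      rw [hqplus]
      rcases le_total 0 (qbar + γ * s) with h | h
      · rw [max_eq_right h]
      · rw [max_eq_left h]
        nlinarith
    rw [k, le_div_iff₀ (by positivity)]
    nlinarith
  rw [hL, hL]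
  nlinarith [mul_nonneg hβ (sq_nonneg (q - qbar))]
end

section
/- Let N ≥ 1 be an integer, δ > 0, and let f : ℝ^N → ℝ be continuous. Define the ball-smoothed function f̂(x) as the average of f over the closed ball of radius δ centered at x, i.e., f̂(x) = (1/λ(B(x,δ)))·∫_{B(x,δ)} f(y) dλ(y) where λ is Lebesgue measure. Then f̂ is differentiable and for every x ∈ ℝ^N its gradient equals ∇f̂(x) = (N/δ)·∫_{S^{N−1}} f(x + δu)·u dσ(u), where σ is the uniform probability measure on the unit sphere S^{N−1} ⊆ ℝ^N. -/
open MeasureTheory Filter Topology Set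

lemma sg_charFun_norm {N : ℕ} (ν : Measure (EuclideanSpace ℝ (Fin N)))
    (hinv : ∀ O : EuclideanSpace ℝ (Fin N) ≃ₗᵢ[ℝ] EuclideanSpace ℝ (Fin N), ν.map O = ν)
    (v w : EuclideanSpace ℝ (Fin N)) (h : ‖v‖ = ‖w‖) : charFun ν v = charFun ν w := by
  set O := Submodule.reflection (ℝ ∙ (v - w))ᗮ with hO
  have hOv : O v = w := Submodule.reflection_sub h
  have h1 : charFun (ν.map O) w = charFun ν v := by
    rw [charFun_apply, charFun_apply, integral_map]
    · refine integral_congr_ae (ae_of_all _ fun x => ?_)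
      simp only
      rw [← hOv, LinearIsometryEquiv.inner_map_map]
    · exact O.continuous.measurable.aemeasurable
    · exact Continuous.aestronglyMeasurable (by fun_prop)
  rw [← h1, hinv]

lemma sg_unique {N : ℕ} (σ ν : Measure (EuclideanSpace ℝ (Fin N)))
    [IsProbabilityMeasure σ] [IsFiniteMeasure ν]
    (hσs : ∀ᵐ x ∂σ, ‖x‖ = 1) (hνs : ∀ᵐ x ∂ν, ‖x‖ = 1)
    (hσ : ∀ O : EuclideanSpace ℝ (Fin N) ≃ₗᵢ[ℝ] EuclideanSpace ℝ (Fin N), σ.map O = σ)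
    (hν : ∀ O : EuclideanSpace ℝ (Fin N) ≃ₗᵢ[ℝ] EuclideanSpace ℝ (Fin N), ν.map O = ν) :
    ν = ν univ • σ := by
  have hfin : IsFiniteMeasure (ν univ • σ) := by
    constructor
    simp
  apply Measure.ext_of_charFun
  funext ξ
  have e1 : ∫ x, charFun ν (‖ξ‖ • x) ∂σ = charFun ν ξ := by
    have : ∫ x, charFun ν (‖ξ‖ • x) ∂σ = ∫ x, charFun ν ξ ∂σ := by
      refine integral_congr_ae ?_
      filter_upwards [hσs] with x hx
      exact sg_charFun_norm ν hν _ _ (by simp [norm_smul, hx])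
    rw [this]; simp
  have e2 : ∫ x, charFun σ (‖ξ‖ • x) ∂ν = ν.real univ • charFun σ ξ := by
    have : ∫ x, charFun σ (‖ξ‖ • x) ∂ν = ∫ x, charFun σ ξ ∂ν := by
      refine integral_congr_ae ?_
      filter_upwards [hνs] with x hx
      exact sg_charFun_norm σ hσ _ _ (by simp [norm_smul, hx])
    rw [this]; simp
  have e3 : ∫ x, charFun ν (‖ξ‖ • x) ∂σ = ∫ x, charFun σ (‖ξ‖ • x) ∂ν := by
    simp only [charFun_apply]
    rw [integral_integral_swap]
    · refine integral_congr_ae (ae_of_all _ fun y => ?_)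
      refine integral_congr_ae (ae_of_all _ fun x => ?_)
      simp only [inner_smul_right]
      rw [real_inner_comm]
    · refine Integrable.mono' (integrable_const (1:ℝ)) ?_ (ae_of_all _ fun p => ?_)
      · apply Continuous.aestronglyMeasurable
        unfold Function.uncurry
        fun_prop
      · simp only [Function.uncurry]
        rw [Complex.norm_exp_ofReal_mul_I]
  rw [← e1, e3, e2]
  simp only [charFun_apply, integral_smul_measure]
  rfl

lemma sg_key {N : ℕ} (σ : Measure (EuclideanSpace ℝ (Fin N))) [IsProbabilityMeasure σ]
    (hσs : ∀ᵐ x ∂σ, ‖x‖ = 1)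
    (hσ : ∀ O : EuclideanSpace ℝ (Fin N) ≃ₗᵢ[ℝ] EuclideanSpace ℝ (Fin N), σ.map O = σ)
    (q : ℝ → ℝ) (hq : Continuous q) (hq0 : ∀ r, 0 ≤ r → 0 ≤ q r) (hqz : q 0 = 0)
    (hint : Integrable (fun z : EuclideanSpace ℝ (Fin N) => q ‖z‖))
    (h : EuclideanSpace ℝ (Fin N) → EuclideanSpace ℝ (Fin N)) (hh : Continuous h) :
    ∫ z : EuclideanSpace ℝ (Fin N), q ‖z‖ • h (‖z‖⁻¹ • z) =
      (∫ z : EuclideanSpace ℝ (Fin N), q ‖z‖) • ∫ u, h u ∂σ := by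
  set d : EuclideanSpace ℝ (Fin N) → ENNReal := fun z => ENNReal.ofReal (q ‖z‖) with hd
  have hdm : Measurable d :=
    (ENNReal.continuous_ofReal.comp (hq.comp continuous_norm)).measurable
  set ν := (volume : Measure (EuclideanSpace ℝ (Fin N))).withDensity d with hνdef
  have hum : Measurable (fun z : EuclideanSpace ℝ (Fin N) => ‖z‖⁻¹ • z) := by fun_prop
  set τ := ν.map (fun z => ‖z‖⁻¹ • z) with hτ
  have hνinv : ∀ O : EuclideanSpace ℝ (Fin N) ≃ₗᵢ[ℝ] EuclideanSpace ℝ (Fin N), ν.map O = ν := by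
    intro O
    ext s hs
    rw [Measure.map_apply O.continuous.measurable hs, hνdef, withDensity_apply _ hs,
      withDensity_apply _ (O.continuous.measurable hs),
      ← O.measurePreserving.setLIntegral_comp_preimage hs hdm]
    simp [hd]
  have hνuniv : ν univ = ENNReal.ofReal (∫ z : EuclideanSpace ℝ (Fin N), q ‖z‖) := by
    rw [hνdef, withDensity_apply _ MeasurableSet.univ, Measure.restrict_univ,
      ofReal_integral_eq_lintegral_ofReal hint (ae_of_all _ fun z => hq0 _ (norm_nonneg _))]
  have hνfin : IsFiniteMeasure ν := ⟨by rw [hνuniv]; exact ENNReal.ofReal_lt_top⟩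
  have hτuniv : τ univ = ν univ := by
    rw [hτ, Measure.map_apply hum MeasurableSet.univ, preimage_univ]
  have hτfin : IsFiniteMeasure τ := ⟨by rw [hτuniv]; exact measure_lt_top _ _⟩
  have hτinv : ∀ O : EuclideanSpace ℝ (Fin N) ≃ₗᵢ[ℝ] EuclideanSpace ℝ (Fin N), τ.map O = τ := by
    intro O
    rw [hτ, Measure.map_map O.continuous.measurable hum]
    conv_rhs => rw [← hνinv O, Measure.map_map hum O.continuous.measurable]
    congr 1
    funext z
    simp
  have hτs : ∀ᵐ x ∂τ, ‖x‖ = 1 := by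
    rw [hτ, ae_map_iff hum.aemeasurable (measurableSet_eq_fun (by fun_prop) (by fun_prop)),
      hνdef, ae_withDensity_iff hdm]
    refine ae_of_all _ fun z hz => ?_
    have : z ≠ 0 := by
      rintro rfl
      simp [hd, hqz] at hz
    have := norm_pos_iff.2 this
    rw [norm_smul, norm_inv, norm_norm, inv_mul_cancel₀ this.ne']
  have hτσ := sg_unique σ τ hσs hτs hσ hτinv
  have : ∫ u, h u ∂τ = (∫ z : EuclideanSpace ℝ (Fin N), q ‖z‖) • ∫ u, h u ∂σ := by
    rw [hτσ, integral_smul_measure, hτuniv, hνuniv, ENNReal.toReal_ofReal]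
    exact integral_nonneg fun z => hq0 _ (norm_nonneg _)
  rw [← this, hτ, integral_map hum.aemeasurable hh.aestronglyMeasurable, hνdef,
    integral_withDensity_eq_integral_toReal_smul hdm (ae_of_all _ fun z => ENNReal.ofReal_lt_top)]
  refine integral_congr_ae (ae_of_all _ fun z => ?_)
  simp only [hd]
  rw [ENNReal.toReal_ofReal (hq0 _ (norm_nonneg _))]

/-- Radial derivative weight of the smooth cutoff. -/
noncomputable def sgK (δ R r : ℝ) : ℝ :=
  2 / (R ^ 2 - δ ^ 2) * deriv Real.smoothTransition ((R ^ 2 - r ^ 2) / (R ^ 2 - δ ^ 2))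

/-- Smooth cutoff equal to one on `|r| ≤ δ` and to zero on `|r| ≥ R`. -/
noncomputable def sgG (δ R r : ℝ) : ℝ :=
  Real.smoothTransition ((R ^ 2 - r ^ 2) / (R ^ 2 - δ ^ 2))

lemma sg_deriv_zero {s : ℝ} (hs : s ≤ 0 ∨ 1 ≤ s) : deriv Real.smoothTransition s = 0 := by
  rcases hs with hs | hs
  · apply IsLocalMin.deriv_eq_zero
    refine Eventually.of_forall fun y => ?_
    rw [Real.smoothTransition.zero_of_nonpos hs]
    exact Real.smoothTransition.nonneg y
  · apply IsLocalMax.deriv_eq_zero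
    refine Eventually.of_forall fun y => ?_
    rw [Real.smoothTransition.one_of_one_le hs]
    exact Real.smoothTransition.le_one y

lemma sg_D_pos {δ R : ℝ} (hδ : 0 < δ) (hR : δ < R) : 0 < R ^ 2 - δ ^ 2 := by nlinarith

lemma sgK_zero {δ R r : ℝ} (hδ : 0 < δ) (hR : δ < R) (hr : 0 ≤ r) (h : r ≤ δ ∨ R ≤ r) :
    sgK δ R r = 0 := by
  have hD := sg_D_pos hδ hR
  unfold sgK
  rw [sg_deriv_zero, mul_zero]
  rcases h with h | h
  · right
    rw [le_div_iff₀ hD]; nlinarith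
  · left
    apply div_nonpos_of_nonpos_of_nonneg _ hD.le
    nlinarith

lemma sgK_nonneg {δ R r : ℝ} (hδ : 0 < δ) (hR : δ < R) : 0 ≤ sgK δ R r := by
  have hD := sg_D_pos hδ hR
  exact mul_nonneg (by positivity) Real.smoothTransition.monotone.deriv_nonneg

lemma sg_deriv_cont : Continuous (deriv Real.smoothTransition) :=
  (Real.smoothTransition.contDiff (n := 1)).continuous_deriv le_rfl

lemma sgK_cont (δ R : ℝ) : Continuous (sgK δ R) := by
  unfold sgK
  have := sg_deriv_cont
  fun_prop

lemma sgG_one {δ R r : ℝ} (hδ : 0 < δ) (hR : δ < R) (hr : 0 ≤ r) (h : r ≤ δ) :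
    sgG δ R r = 1 := by
  have hD := sg_D_pos hδ hR
  apply Real.smoothTransition.one_of_one_le
  rw [le_div_iff₀ hD]; nlinarith

lemma sgG_zero {δ R r : ℝ} (hδ : 0 < δ) (hR : δ < R) (h : R ≤ r) :
    sgG δ R r = 0 := by
  have hD := sg_D_pos hδ hR
  apply Real.smoothTransition.zero_of_nonpos
  apply div_nonpos_of_nonpos_of_nonneg _ hD.le
  nlinarith

lemma sg_transition_hasDerivAt (s : ℝ) :
    HasDerivAt Real.smoothTransition (deriv Real.smoothTransition s) s :=
  ((Real.smoothTransition.contDiff (n := 1)).differentiable (by simp) s).hasDerivAt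

lemma sgG_hasDerivAt (δ R r : ℝ) : HasDerivAt (sgG δ R) (-(sgK δ R r * r)) r := by
  have h1 : HasDerivAt (fun r : ℝ => (R ^ 2 - r ^ 2) / (R ^ 2 - δ ^ 2))
      (-(2 * r) / (R ^ 2 - δ ^ 2)) r := by
    have := (((hasDerivAt_id r).pow 2).const_sub (R ^ 2)).div_const (R ^ 2 - δ ^ 2)
    simpa using this
  have h2 := (sg_transition_hasDerivAt ((R ^ 2 - r ^ 2) / (R ^ 2 - δ ^ 2))).comp r h1
  refine h2.congr_deriv ?_
  unfold sgK
  ring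

lemma sgG_hasFDerivAt {N : ℕ} (δ R : ℝ) (z : EuclideanSpace ℝ (Fin N)) :
    HasFDerivAt (fun z : EuclideanSpace ℝ (Fin N) => sgG δ R ‖z‖)
      (-(sgK δ R ‖z‖ • innerSL ℝ z)) z := by
  have h1 : HasFDerivAt (fun z : EuclideanSpace ℝ (Fin N) =>
      (R ^ 2 - ‖z‖ ^ 2) * (R ^ 2 - δ ^ 2)⁻¹)
      ((R ^ 2 - δ ^ 2)⁻¹ • (-((2 : ℕ) • innerSL ℝ z) : EuclideanSpace ℝ (Fin N) →L[ℝ] ℝ)) z :=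
    ((hasStrictFDerivAt_norm_sq z).hasFDerivAt.const_sub (R ^ 2)).mul_const _
  have h2 := (sg_transition_hasDerivAt ((R ^ 2 - ‖z‖ ^ 2) * (R ^ 2 - δ ^ 2)⁻¹)).comp_hasFDerivAt z h1
  refine h2.congr_fderiv ?_
  unfold sgK
  ext w
  simp [div_eq_mul_inv]
  ring

lemma sgG_contDiff {N : ℕ} (δ R : ℝ) :
    ContDiff ℝ 1 (fun z : EuclideanSpace ℝ (Fin N) => sgG δ R ‖z‖) := by
  unfold sgG
  refine (Real.smoothTransition.contDiff (n := 1)).comp ?_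
  exact (contDiff_const.sub (contDiff_norm_sq ℝ)).div_const _

lemma sgG_supp {N : ℕ} {δ R : ℝ} (hδ : 0 < δ) (hR : δ < R) :
    HasCompactSupport (fun z : EuclideanSpace ℝ (Fin N) => sgG δ R ‖z‖) := by
  refine HasCompactSupport.intro (isCompact_closedBall 0 R) fun z hz => ?_
  apply sgG_zero hδ hR
  simp at hz
  exact hz.le

lemma sgK_supp {N : ℕ} {δ R : ℝ} (hδ : 0 < δ) (hR : δ < R) :
    HasCompactSupport (fun z : EuclideanSpace ℝ (Fin N) => sgK δ R ‖z‖) := by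
  refine HasCompactSupport.intro (isCompact_closedBall 0 R) fun z hz => ?_
  apply sgK_zero hδ hR (norm_nonneg _)
  simp at hz
  exact Or.inr hz.le

lemma sg_integrable {N : ℕ} {δ R : ℝ} (hδ : 0 < δ) (hR : δ < R)
    {F : Type*} [NormedAddCommGroup F] [NormedSpace ℝ F]
    (h : EuclideanSpace ℝ (Fin N) → F) (hh : Continuous h) :
    Integrable (fun z : EuclideanSpace ℝ (Fin N) => sgK δ R ‖z‖ • h z) := by
  apply Continuous.integrable_of_hasCompactSupport
  · have := sgK_cont δ R
    fun_prop
  · exact (sgK_supp hδ hR).smul_right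

/-- The gradient of the mollified average. -/
lemma sg_conv {N : ℕ} {δ R : ℝ} (hδ : 0 < δ) (hR : δ < R)
    (f : EuclideanSpace ℝ (Fin N) → ℝ) (hf : Continuous f) (x : EuclideanSpace ℝ (Fin N)) :
    HasFDerivAt (fun x => ∫ t, f t * sgG δ R ‖x - t‖)
      (innerSL ℝ (∫ z, sgK δ R ‖z‖ • (f (x + z) • z))) x := by
  have h := (sgG_supp (N := N) hδ hR).hasFDerivAt_convolution_right (ContinuousLinearMap.mul ℝ ℝ)
    (hf.locallyIntegrable (μ := volume)) (sgG_contDiff δ R) x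
  refine h.congr_fderiv ?_
  rw [← ContinuousLinearMap.integral_comp_comm _ (sg_integrable hδ hR _ (by fun_prop)),
    convolution_def, ← integral_add_left_eq_self _ x]
  refine integral_congr_ae (ae_of_all _ fun z => ?_)
  simp only [(sgG_hasFDerivAt δ R _).fderiv]
  ext w
  change f (x + z) * (-(sgK δ R ‖x - (x + z)‖ * inner ℝ (x - (x + z)) w)) =
    inner ℝ (sgK δ R ‖z‖ • f (x + z) • z) w
  rw [show x - (x + z) = -z by abel, norm_neg, inner_neg_left, real_inner_smul_left,
    real_inner_smul_left]
  ring

lemma sg_mass {N : ℕ} (hN : 1 ≤ N) {δ R : ℝ} (hδ : 0 < δ) (hR : δ < R) :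
    ∃ c : ℝ, δ ^ (N - 1) ≤ c ∧ c ≤ R ^ (N - 1) ∧
    ∫ z : EuclideanSpace ℝ (Fin N), sgK δ R ‖z‖ * ‖z‖ =
      N * volume.real (Metric.ball (0 : EuclideanSpace ℝ (Fin N)) 1) * c := by
  have : Nonempty (Fin N) := ⟨⟨0, hN⟩⟩
  have hq : Continuous (fun y => sgK δ R y * y) := (sgK_cont δ R).mul continuous_id
  have h1 : ∫ y in δ..R, sgK δ R y * y = 1 := by
    have := intervalIntegral.integral_eq_sub_of_hasDerivAt (a := δ) (b := R)
      (f := fun y => - sgG δ R y) (f' := fun y => sgK δ R y * y)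
      (fun y _ => by
        have h := (sgG_hasDerivAt δ R y).neg
        rw [neg_neg] at h
        exact h) (hq.intervalIntegrable _ _)
    rw [this, sgG_one hδ hR hδ.le le_rfl, sgG_zero hδ hR le_rfl]
    simp
  refine ⟨∫ y in δ..R, y ^ (N - 1) * (sgK δ R y * y), ?_, ?_, ?_⟩
  · calc δ ^ (N - 1) = ∫ y in δ..R, δ ^ (N - 1) * (sgK δ R y * y) := by
          rw [intervalIntegral.integral_const_mul, h1, mul_one]
      _ ≤ _ := by
          apply intervalIntegral.integral_mono_on hR.le
          · exact (continuous_const.mul hq).intervalIntegrable _ _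
          · exact ((continuous_pow _).mul hq).intervalIntegrable _ _
          · intro y hy
            have h0 : 0 ≤ y := hδ.le.trans hy.1
            have := sgK_nonneg (r := y) hδ hR
            have := hy.1
            gcongr
  · calc _ ≤ ∫ y in δ..R, R ^ (N - 1) * (sgK δ R y * y) := by
          apply intervalIntegral.integral_mono_on hR.le
          · exact ((continuous_pow _).mul hq).intervalIntegrable _ _
          · exact (continuous_const.mul hq).intervalIntegrable _ _
          · intro y hy
            have h0 : 0 ≤ y := hδ.le.trans hy.1
            have := sgK_nonneg (r := y) hδ hR
            have := hy.2
            gcongr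
      _ = _ := by
          rw [intervalIntegral.integral_const_mul, h1, mul_one]
  · rw [integral_fun_norm_addHaar volume (fun y => sgK δ R y * y)]
    simp only [finrank_euclideanSpace, Fintype.card_fin, nsmul_eq_mul, smul_eq_mul]
    rw [intervalIntegral.integral_of_le hR.le, mul_assoc]
    congr 2
    refine (setIntegral_eq_of_subset_of_forall_sdiff_eq_zero measurableSet_Ioi ?_ ?_)
    · exact fun y hy => hδ.trans hy.1
    · intro y hy
      have h0 : 0 < y := hy.1
      rw [sgK_zero hδ hR h0.le, zero_mul, mul_zero]
      by_contra! hc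
      exact hy.2 ⟨hc.1, hc.2.le⟩

lemma sg_tendsto {N : ℕ} {δ : ℝ} (hδ : 0 < δ) (R : ℕ → ℝ) (hR : ∀ n, δ < R n)
    (hRl : Tendsto R atTop (𝓝 δ)) (hR1 : ∀ n, R n ≤ δ + 1)
    (f : EuclideanSpace ℝ (Fin N) → ℝ) (hf : Continuous f) (x : EuclideanSpace ℝ (Fin N)) :
    Tendsto (fun n => ∫ t, f t * sgG δ (R n) ‖x - t‖) atTop
      (𝓝 (∫ t in Metric.closedBall x δ, f t)) := by
  rw [← integral_indicator measurableSet_closedBall]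
  refine tendsto_integral_of_dominated_convergence
    ((Metric.closedBall x (δ + 1)).indicator fun t => |f t|) ?_ ?_ ?_ ?_
  · intro n
    apply Continuous.aestronglyMeasurable
    have : Continuous (fun t => sgG δ (R n) ‖x - t‖) :=
      (sgG_contDiff (N := N) δ (R n)).continuous.comp (by fun_prop : Continuous fun t => x - t)
    fun_prop
  · rw [integrable_indicator_iff measurableSet_closedBall]
    exact hf.abs.continuousOn.integrableOn_compact (isCompact_closedBall _ _)
  · intro n
    refine ae_of_all _ fun t => ?_
    by_cases ht : t ∈ Metric.closedBall x (δ + 1)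
    · rw [indicator_of_mem ht, norm_mul, Real.norm_eq_abs, Real.norm_eq_abs]
      refine mul_le_of_le_one_right (abs_nonneg _) ?_
      unfold sgG
      rw [abs_of_nonneg (Real.smoothTransition.nonneg _)]
      exact Real.smoothTransition.le_one _
    · rw [indicator_of_notMem ht, sgG_zero hδ (hR n)]
      · simp
      · rw [Metric.mem_closedBall, dist_comm, dist_eq_norm] at ht
        exact (hR1 n).trans (not_le.1 ht).le
  · refine ae_of_all _ fun t => ?_
    apply tendsto_const_nhds.congr'
    by_cases ht : t ∈ Metric.closedBall x δ
    · refine Eventually.of_forall fun n => ?_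
      rw [indicator_of_mem ht]
      rw [Metric.mem_closedBall, dist_comm, dist_eq_norm] at ht
      simp only
      rw [sgG_one hδ (hR n) (norm_nonneg _) ht, mul_one]
    · rw [indicator_of_notMem ht]
      rw [Metric.mem_closedBall, dist_comm, dist_eq_norm, not_le] at ht
      filter_upwards [hRl.eventually (gt_mem_nhds ht)] with n hn
      rw [sgG_zero hδ (hR n) hn.le, mul_zero]

lemma sg_est {N : ℕ} (σ : Measure (EuclideanSpace ℝ (Fin N))) [IsProbabilityMeasure σ]
    (hσs : ∀ᵐ x ∂σ, ‖x‖ = 1)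
    (hσ : ∀ O : EuclideanSpace ℝ (Fin N) ≃ₗᵢ[ℝ] EuclideanSpace ℝ (Fin N), σ.map O = σ)
    {δ R : ℝ} (hδ : 0 < δ) (hR : δ < R)
    (f : EuclideanSpace ℝ (Fin N) → ℝ) (hf : Continuous f) (x : EuclideanSpace ℝ (Fin N))
    (e : ℝ) (he : ∀ z : EuclideanSpace ℝ (Fin N), δ ≤ ‖z‖ → ‖z‖ ≤ R →
      |f (x + z) - f (x + δ • (‖z‖⁻¹ • z))| ≤ e) :
    ‖(∫ z, sgK δ R ‖z‖ • (f (x + z) • z)) -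
      (∫ z : EuclideanSpace ℝ (Fin N), sgK δ R ‖z‖ * ‖z‖) • ∫ u, f (x + δ • u) • u ∂σ‖
      ≤ (∫ z : EuclideanSpace ℝ (Fin N), sgK δ R ‖z‖ * ‖z‖) * e := by
  have hq : Continuous (fun y => sgK δ R y * y) := (sgK_cont δ R).mul continuous_id
  have hqi : Integrable (fun z : EuclideanSpace ℝ (Fin N) => sgK δ R ‖z‖ * ‖z‖) :=
    sg_integrable hδ hR (fun z => ‖z‖) continuous_norm
  have hcont : Continuous (fun u : EuclideanSpace ℝ (Fin N) => f (x + δ • u) • u) := by fun_prop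
  have hu : ∀ z : EuclideanSpace ℝ (Fin N), ‖‖z‖⁻¹ • z‖ ≤ 1 := by
    intro z
    rw [norm_smul, norm_inv, norm_norm]
    exact inv_mul_le_one
  have key := sg_key σ hσs hσ (fun y => sgK δ R y * y) hq
    (fun r hr => mul_nonneg (sgK_nonneg hδ hR) hr) (by simp) hqi
    (fun u => f (x + δ • u) • u) hcont
  have hint2 : Integrable (fun z : EuclideanSpace ℝ (Fin N) =>
      (sgK δ R ‖z‖ * ‖z‖) • (f (x + δ • (‖z‖⁻¹ • z)) • (‖z‖⁻¹ • z))) := by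
    obtain ⟨C, hC⟩ := (isCompact_closedBall (0 : EuclideanSpace ℝ (Fin N)) 1).exists_bound_of_continuousOn
      hcont.continuousOn
    refine (hqi.mul_const C).mono' ?_ (ae_of_all _ fun z => ?_)
    · refine AEStronglyMeasurable.smul hqi.aestronglyMeasurable ?_
      have hum : Measurable (fun z : EuclideanSpace ℝ (Fin N) => ‖z‖⁻¹ • z) := by fun_prop
      exact (hcont.measurable.comp hum).aestronglyMeasurable
    · rw [norm_smul, Real.norm_of_nonneg (mul_nonneg (sgK_nonneg hδ hR) (norm_nonneg _))]
      refine mul_le_mul_of_nonneg_left (hC _ ?_) (mul_nonneg (sgK_nonneg hδ hR) (norm_nonneg _))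
      simpa using hu z
  rw [← key, ← integral_sub (sg_integrable hδ hR _ (by fun_prop)) hint2, ← integral_mul_const]
  refine norm_integral_le_of_norm_le (hqi.mul_const e) (ae_of_all _ fun z => ?_)
  by_cases hz : δ ≤ ‖z‖ ∧ ‖z‖ ≤ R
  · have hz0 : ‖z‖ ≠ 0 := (hδ.trans_le hz.1).ne'
    have : sgK δ R ‖z‖ • f (x + z) • z -
        (sgK δ R ‖z‖ * ‖z‖) • f (x + δ • ‖z‖⁻¹ • z) • ‖z‖⁻¹ • z =
        (sgK δ R ‖z‖) • ((f (x + z) - f (x + δ • ‖z‖⁻¹ • z)) • z) := by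
      rw [sub_smul, smul_sub]
      congr 1
      rw [smul_comm (f _) (‖z‖⁻¹) z, smul_smul, mul_assoc, mul_inv_cancel₀ hz0, mul_one]
    rw [this, norm_smul, norm_smul, Real.norm_of_nonneg (sgK_nonneg hδ hR), Real.norm_eq_abs,
      mul_assoc, mul_comm ‖z‖ e]
    have h1 := he z hz.1 hz.2
    have h2 := sgK_nonneg (r := ‖z‖) hδ hR
    gcongr
  · have : sgK δ R ‖z‖ = 0 := by
      apply sgK_zero hδ hR (norm_nonneg _)
      by_contra! hc
      exact hz ⟨hc.1.le, hc.2.le⟩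
    simp [this]

/-- One-point gradient estimation for bandit convex optimization: the ball-smoothed
function `f̂(x) = avg of f over B(x,δ)` is differentiable, with gradient
`∇f̂(x) = (N/δ) · ∫_{S^{N−1}} f(x+δu)·u dσ(u)`, where σ is the uniform probability
measure on the unit sphere (characterized as the rotation-invariant probability
measure supported on the sphere). -/
theorem smoothed_gradient (N : ℕ) (hN : 1 ≤ N) (δ : ℝ) (hδ : 0 < δ)
    (f : EuclideanSpace ℝ (Fin N) → ℝ) (hf : Continuous f)
    (fhat : EuclideanSpace ℝ (Fin N) → ℝ)
    (hfhat : ∀ x, fhat x =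
      ((MeasureTheory.volume (Metric.closedBall x δ)).toReal)⁻¹ *
        ∫ y in Metric.closedBall x δ, f y)
    (σ : MeasureTheory.Measure (EuclideanSpace ℝ (Fin N)))
    (hσprob : MeasureTheory.IsProbabilityMeasure σ)
    (hσsupp : σ (Metric.sphere (0 : EuclideanSpace ℝ (Fin N)) 1)ᶜ = 0)
    (hσinv : ∀ O : EuclideanSpace ℝ (Fin N) ≃ₗᵢ[ℝ] EuclideanSpace ℝ (Fin N),
      σ.map O = σ) :
    ∀ x : EuclideanSpace ℝ (Fin N),
      HasGradientAt fhat (((N : ℝ) / δ) • ∫ u, f (x + δ • u) • u ∂σ) x := by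
  intro x
  have hne : Nonempty (Fin N) := ⟨⟨0, hN⟩⟩
  have hσs : ∀ᵐ x ∂σ, ‖x‖ = 1 := by
    rw [ae_iff]
    convert hσsupp using 2
    ext y; simp
  set V1 := volume.real (Metric.ball (0 : EuclideanSpace ℝ (Fin N)) 1) with hV1
  have hV1pos : 0 < V1 := 
    ENNReal.toReal_pos (Metric.measure_ball_pos _ _ one_pos).ne' measure_ball_lt_top.ne
  set M : ℝ := N * V1 * δ ^ (N - 1) with hM
  set S : EuclideanSpace ℝ (Fin N) → EuclideanSpace ℝ (Fin N) :=
    fun x => ∫ u, f (x + δ • u) • u ∂σ with hS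
  set R : ℕ → ℝ := fun n => δ + 1 / ((n : ℝ) + 1) with hRdef
  have hR : ∀ n, δ < R n := fun n => by simp only [hRdef]; have := Nat.one_div_pos_of_nat (α := ℝ) (n := n); linarith
  have hRl : Tendsto R atTop (𝓝 δ) := by
    have h := (tendsto_one_div_add_atTop_nhds_zero_nat (𝕜 := ℝ)).const_add δ
    rw [add_zero] at h
    exact h
  have hR1 : ∀ n, R n ≤ δ + 1 := fun n => by
    have : 1 / ((n : ℝ) + 1) ≤ 1 := by
      rw [div_le_one (by positivity)]
      have : (0 : ℝ) ≤ n := Nat.cast_nonneg n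
      linarith
    simp only [hRdef]; linarith
  set m : ℕ → ℝ := fun n => ∫ z : EuclideanSpace ℝ (Fin N), sgK δ (R n) ‖z‖ * ‖z‖ with hm
  have hml : Tendsto m atTop (𝓝 M) := by
    choose c hc1 hc2 hc3 using fun n => sg_mass hN hδ (hR n)
    have hc : Tendsto c atTop (𝓝 (δ ^ (N - 1))) :=
      tendsto_of_tendsto_of_tendsto_of_le_of_le tendsto_const_nhds (hRl.pow (N - 1)) hc1 hc2
    have : m = fun n => N * V1 * c n := funext hc3
    rw [this]
    exact hc.const_mul _
  have hm0 : ∀ n, 0 ≤ m n := fun n =>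
    integral_nonneg fun z => mul_nonneg (sgK_nonneg hδ (hR n)) (norm_nonneg _)
  set K := Metric.closedBall x (δ + 2) with hK
  have hKc : IsCompact K := isCompact_closedBall _ _
  obtain ⟨C, hC⟩ := hKc.exists_bound_of_continuousOn hf.continuousOn
  have hC0 : 0 ≤ C := (norm_nonneg _).trans (hC x (Metric.mem_closedBall_self (by linarith)))
  have hSb : ∀ y ∈ Metric.ball x 1, ‖S y‖ ≤ C := by
    intro y hy
    have : ‖S y‖ ≤ C * σ.real univ := by
      apply norm_integral_le_of_norm_le_const
      filter_upwards [hσs] with u hu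
      rw [norm_smul, hu, mul_one]
      apply hC
      rw [hK, Metric.mem_closedBall, dist_eq_norm]
      rw [Metric.mem_ball, dist_eq_norm] at hy
      calc ‖y + δ • u - x‖ = ‖(y - x) + δ • u‖ := by congr 1; abel
        _ ≤ ‖y - x‖ + ‖δ • u‖ := norm_add_le _ _
        _ ≤ δ + 2 := by rw [norm_smul, hu, Real.norm_of_nonneg hδ.le]; linarith
    simpa using this
  have hunif : TendstoUniformlyOn
      (fun n y => innerSL ℝ (∫ z, sgK δ (R n) ‖z‖ • (f (y + z) • z)))
      (fun y => innerSL ℝ (M • S y)) atTop (Metric.ball x 1) := by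
    rw [Metric.tendstoUniformlyOn_iff]
    intro ε hε
    have huc := hKc.uniformContinuousOn_of_continuous hf.continuousOn
    rw [Metric.uniformContinuousOn_iff] at huc
    set e := ε / (2 * (M + 1)) with he
    have hM0 : 0 ≤ M := by positivity
    have hepos : 0 < e := by positivity
    obtain ⟨ρ, hρ, hρf⟩ := huc e hepos
    have hd : 0 < min 1 (ε / (2 * (C + 1))) := by positivity
    filter_upwards [hRl.eventually (gt_mem_nhds (by linarith : δ < δ + ρ)),
      (Metric.tendsto_nhds.1 hml) _ hd] with n hn1 hn2 y hy
    rw [Real.dist_eq, lt_min_iff] at hn2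
    have hmn : m n ≤ M + 1 := by have := (abs_lt.1 hn2.1).2; linarith
    have hest := sg_est σ hσs hσinv hδ (hR n) f hf y e (by
      intro z hz1 hz2
      have hz0 : 0 < ‖z‖ := hδ.trans_le hz1
      rw [Metric.mem_ball, dist_eq_norm] at hy
      have hzn : ‖δ • ‖z‖⁻¹ • z‖ = δ := by
        rw [norm_smul, norm_smul, norm_inv, norm_norm, inv_mul_cancel₀ hz0.ne',
          Real.norm_of_nonneg hδ.le, mul_one]
      have hin : ∀ w : EuclideanSpace ℝ (Fin N), ‖w‖ ≤ δ + 1 → y + w ∈ K := by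
        intro w hw
        rw [hK, Metric.mem_closedBall, dist_eq_norm]
        calc ‖y + w - x‖ = ‖(y - x) + w‖ := by congr 1; abel
          _ ≤ ‖y - x‖ + ‖w‖ := norm_add_le _ _
          _ ≤ δ + 2 := by linarith
      have := hρf _ (hin z (hz2.trans (hR1 n))) _ (hin (δ • ‖z‖⁻¹ • z) (by linarith)) (by
        rw [dist_add_left, dist_eq_norm]
        have h1 : z - δ • ‖z‖⁻¹ • z = (‖z‖ - δ) • (‖z‖⁻¹ • z) := by
          rw [sub_smul, smul_smul ‖z‖, mul_inv_cancel₀ hz0.ne', one_smul]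
        rw [h1, norm_smul, norm_smul, norm_inv, norm_norm, inv_mul_cancel₀ hz0.ne', mul_one,
          Real.norm_of_nonneg (by linarith)]
        linarith)
      rw [Real.dist_eq] at this
      exact this.le)
    rw [dist_eq_norm, ← map_sub, innerSL_apply_norm, norm_sub_rev]
    have hsplit : (∫ z, sgK δ (R n) ‖z‖ • (f (y + z) • z)) - M • S y =
        ((∫ z, sgK δ (R n) ‖z‖ • (f (y + z) • z)) - m n • S y) + (m n - M) • S y := by
      rw [sub_smul]; abel
    have h1 : m n * e ≤ ε / 2 := by
      calc m n * e ≤ (M + 1) * e := by gcongr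
        _ = ε / 2 := by rw [he]; field_simp
    have h2 : ‖(m n - M) • S y‖ < ε / 2 := by
      rw [norm_smul, Real.norm_eq_abs]
      calc |m n - M| * ‖S y‖ ≤ |m n - M| * (C + 1) := by
            gcongr; linarith [hSb y hy]
        _ < ε / (2 * (C + 1)) * (C + 1) := by
            have := hn2.2
            gcongr
        _ = ε / 2 := by field_simp
    rw [hsplit]
    calc _ ≤ _ := norm_add_le _ _
      _ < ε := by
        have : ‖(∫ z, sgK δ (R n) ‖z‖ • (f (y + z) • z)) - m n • S y‖ ≤ m n * e := hest
        linarith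
  have hA : HasFDerivAt (fun y => ∫ t in Metric.closedBall y δ, f t) (innerSL ℝ (M • S x)) x :=
    hasFDerivAt_of_tendstoUniformlyOn (l := atTop)
      (f := fun n y => ∫ t, f t * sgG δ (R n) ‖y - t‖) (g' := fun y => innerSL ℝ (M • S y))
      Metric.isOpen_ball hunif
      (fun n y _ => sg_conv hδ (hR n) f hf y)
      (fun y _ => sg_tendsto hδ R hR hRl hR1 f hf y) (Metric.mem_ball_self one_pos)
  have hV : ∀ y : EuclideanSpace ℝ (Fin N),
      (volume (Metric.closedBall y δ)).toReal = δ ^ N * V1 := by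
    intro y
    rw [Measure.addHaar_closedBall _ _ hδ.le, ENNReal.toReal_mul, ENNReal.toReal_ofReal (by positivity)]
    simp [hV1, Measure.real]
  have hfe : fhat = fun y => (δ ^ N * V1)⁻¹ * ∫ t in Metric.closedBall y δ, f t := by
    funext y; rw [hfhat, hV]
  rw [hasGradientAt_iff_hasFDerivAt, hfe]
  refine (hA.const_mul _).congr_fderiv ?_
  have hcoef : (δ ^ N * V1)⁻¹ * M = N / δ := by
    obtain ⟨k, rfl⟩ : ∃ k, N = k + 1 := ⟨N - 1, by omega⟩
    rw [hM, Nat.add_sub_cancel, pow_succ]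
    field_simp
  ext w
  have : ∀ a b : EuclideanSpace ℝ (Fin N), innerSL ℝ a b = inner ℝ a b := fun a b => rfl
  rw [← hcoef]
  simp [this]
  ring
end
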